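/- arXiv:2603.29499 — 2 statements merged into one kernel-verified Lean document; each statement's English description precedes it below -/
import Mathlib

section
/- Let Σ be a symmetric positive-definite real n×n matrix, g ∈ ℝ^n, λ > 0, c > 0, and let μ_Σ be the probability measure on ℝ^n with density N(·; 0, Σ). Define the weight w(ε) := c · exp(−gᵀε/λ). Then (∫ w dμ_Σ)² / (∫ w² dμ_Σ) = exp(−gᵀΣg/λ²). Consequently, for any number of samples I > 0, the idealized effective sample size I^ESS := I · (∫ w dμ_Σ)² / (∫ w² dμ_Σ) equals I · exp(−(1/λ²) gᵀΣg). -/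
/-!
Everything reduces to the moment generating function of the centred Gaussian,
`∫ exp(t·ε) dμ_Σ = exp(½ tᵀΣt)` (`integral_exp_dotProduct`). Applied at `t = -g/λ` and `t = -2g/λ`
it gives `(∫ w)² = c² exp(gᵀΣg/λ²)` and `∫ w² = c² exp(2gᵀΣg/λ²)`, whose quotient is the claim.

The moment generating function comes from completing the square
(`gaussDensity_mul_exp`): tilting the density `N(·; 0, Σ)` by `exp(t·ε)` yields
`exp(½ tᵀΣt) N(·; 0, Σ)` translated by `Σt`, so translation invariance of Lebesgue measure reduces
it to the normalisation `∫ N(·; 0, Σ) = 1` (`integral_gaussDensity`). For the latter,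
factor `Σ⁻¹ = BᵀB`; the linear substitution `y = Bε` has Jacobian `|det B| = (det Σ)^{-1/2}`
and turns the integrand into a product of one-dimensional Gaussians.
-/

open MeasureTheory Matrix

/-- The Gaussian density `N(ε; m, Σ)` on `ℝ^n`. -/
noncomputable def gaussDensity {n : ℕ} (S : Matrix (Fin n) (Fin n) ℝ) (m ε : Fin n → ℝ) : ℝ :=
  (2 * Real.pi) ^ (-(n : ℝ) / 2) * S.det ^ (-(1 : ℝ) / 2) *
    Real.exp (-(1 / 2) * ((ε - m) ⬝ᵥ (S⁻¹ *ᵥ (ε - m))))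

open scoped MatrixOrder Matrix.Norms.L2Operator in
theorem exists_transpose_mul_self_eq_inv {n : ℕ} {S : Matrix (Fin n) (Fin n) ℝ} (hS : S.PosDef) :
    ∃ B : Matrix (Fin n) (Fin n) ℝ, S⁻¹ = Bᵀ * B := by
  obtain ⟨B, hB⟩ := CStarAlgebra.nonneg_iff_eq_star_mul_self.mp hS.inv.posSemidef.nonneg
  exact ⟨B, by simpa [star_eq_conjTranspose] using hB⟩

theorem integral_exp_neg_half_dotProduct_self (n : ℕ) :
    ∫ y : Fin n → ℝ, Real.exp (-(1 / 2) * (y ⬝ᵥ y)) = √(2 * Real.pi) ^ n := by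
  have h : ∀ y : Fin n → ℝ, Real.exp (-(1 / 2) * (y ⬝ᵥ y))
      = ∏ i, (fun x : ℝ => Real.exp (-(1 / 2) * x ^ 2)) (y i) := by
    intro y
    simp only [dotProduct, Finset.mul_sum, Real.exp_sum, sq]
  simp_rw [h]
  rw [integral_fintype_prod_volume_eq_pow (fun x : ℝ => Real.exp (-(1 / 2) * x ^ 2)),
    integral_gaussian, Fintype.card_fin]
  congr 2
  ring

theorem integral_comp_mulVec {n : ℕ} {B : Matrix (Fin n) (Fin n) ℝ} (hB : B.det ≠ 0)
    {f : (Fin n → ℝ) → ℝ} (hf : Continuous f) :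
    ∫ x, f (B *ᵥ x) = |B.det|⁻¹ * ∫ y, f y := by
  have hφ : Measurable (toLin' B) := (LinearMap.continuous_on_pi _).measurable
  have h := integral_map (μ := volume) hφ.aemeasurable
    (hf.aestronglyMeasurable (μ := Measure.map (toLin' B) volume))
  rw [Real.map_matrix_volume_pi_eq_smul_volume_pi hB, integral_smul_measure] at h
  simpa [ENNReal.toReal_ofReal, abs_inv] using h.symm

theorem continuous_gaussDensity {n : ℕ} (S : Matrix (Fin n) (Fin n) ℝ) (m : Fin n → ℝ) :
    Continuous (gaussDensity S m) := by
  unfold gaussDensity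
  fun_prop

theorem gaussDensity_nonneg {n : ℕ} {S : Matrix (Fin n) (Fin n) ℝ} (hS : S.PosDef)
    (m ε : Fin n → ℝ) : 0 ≤ gaussDensity S m ε := by
  have := hS.det_pos
  unfold gaussDensity
  positivity

/-- The Gaussian density is normalised. -/
theorem integral_gaussDensity {n : ℕ} {S : Matrix (Fin n) (Fin n) ℝ} (hS : S.PosDef) :
    ∫ ε, gaussDensity S 0 ε = 1 := by
  obtain ⟨B, hB⟩ := exists_transpose_mul_self_eq_inv hS
  have hdet : S.det⁻¹ = B.det ^ 2 := by
    have := congrArg Matrix.det hB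
    rw [det_nonsing_inv, Ring.inverse_eq_inv', det_mul, det_transpose] at this
    rw [this, sq]
  have hB0 : B.det ≠ 0 := by
    intro h
    have := inv_pos.mpr hS.det_pos
    simp [hdet, h] at this
  have hquad : ∀ ε : Fin n → ℝ, ε ⬝ᵥ (S⁻¹ *ᵥ ε) = (B *ᵥ ε) ⬝ᵥ (B *ᵥ ε) := by
    intro ε
    rw [hB, ← mulVec_mulVec, dotProduct_mulVec, vecMul_transpose]
  have hSpow : S.det ^ (-(1 : ℝ) / 2) = |B.det| := by
    rw [neg_div, Real.rpow_neg hS.det_pos.le, ← Real.inv_rpow hS.det_pos.le, hdet,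
      ← Real.sqrt_eq_rpow, Real.sqrt_sq_eq_abs]
  have hpi : (2 * Real.pi) ^ (-(n : ℝ) / 2) * √(2 * Real.pi) ^ n = 1 := by
    have h0 : 0 < 2 * Real.pi := by positivity
    rw [Real.sqrt_eq_rpow, ← Real.rpow_natCast, ← Real.rpow_mul h0.le, ← Real.rpow_add h0]
    ring_nf
    simp
  simp only [gaussDensity, sub_zero, hquad]
  rw [integral_const_mul, integral_comp_mulVec hB0
    (f := fun y => Real.exp (-(1 / 2) * (y ⬝ᵥ y))) (by fun_prop),
    integral_exp_neg_half_dotProduct_self, hSpow]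
  have : |B.det| ≠ 0 := abs_ne_zero.mpr hB0
  field_simp
  rw [← neg_div, hpi]

/-- Completing the square: tilting the centred Gaussian density by `exp(t·ε)` translates it by `Σt`
and multiplies it by `exp(½ tᵀΣt)`. -/
theorem gaussDensity_mul_exp {n : ℕ} {S : Matrix (Fin n) (Fin n) ℝ} (hS : S.PosDef)
    (t ε : Fin n → ℝ) :
    gaussDensity S 0 ε * Real.exp (t ⬝ᵥ ε)
      = Real.exp (1 / 2 * (t ⬝ᵥ (S *ᵥ t))) * gaussDensity S 0 (ε - S *ᵥ t) := by
  have hu : IsUnit S.det := hS.det_pos.ne'.isUnit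
  have hSym : Sᵀ = S := by simpa using hS.isHermitian.eq
  have h1 : S⁻¹ *ᵥ (S *ᵥ t) = t := by rw [mulVec_mulVec, nonsing_inv_mul _ hu, one_mulVec]
  have h2 : (S *ᵥ t) ⬝ᵥ (S⁻¹ *ᵥ ε) = t ⬝ᵥ ε := by
    rw [dotProduct_comm, dotProduct_mulVec, ← mulVec_transpose, hSym, mulVec_mulVec,
      mul_nonsing_inv _ hu, one_mulVec, dotProduct_comm]
  have h3 : (ε - S *ᵥ t) ⬝ᵥ (S⁻¹ *ᵥ (ε - S *ᵥ t))
      = ε ⬝ᵥ (S⁻¹ *ᵥ ε) - 2 * (t ⬝ᵥ ε) + t ⬝ᵥ (S *ᵥ t) := by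
    rw [mulVec_sub, h1, sub_dotProduct, dotProduct_sub, dotProduct_sub, h2,
      dotProduct_comm ε t, dotProduct_comm (S *ᵥ t) t]
    ring
  simp only [gaussDensity, sub_zero, h3]
  rw [mul_assoc, ← Real.exp_add, mul_left_comm, ← Real.exp_add]
  ring_nf

/-- The moment generating function of the centred Gaussian measure. -/
theorem integral_exp_dotProduct {n : ℕ} {S : Matrix (Fin n) (Fin n) ℝ} (hS : S.PosDef)
    (t : Fin n → ℝ) :
    ∫ ε, Real.exp (t ⬝ᵥ ε) ∂(volume.withDensity fun ε => ENNReal.ofReal (gaussDensity S 0 ε))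
      = Real.exp (1 / 2 * (t ⬝ᵥ (S *ᵥ t))) := by
  rw [integral_withDensity_eq_integral_toReal_smul
    (continuous_gaussDensity S 0).measurable.ennreal_ofReal
    (Filter.Eventually.of_forall fun _ => ENNReal.ofReal_lt_top)]
  simp only [ENNReal.toReal_ofReal (gaussDensity_nonneg hS 0 _), smul_eq_mul,
    gaussDensity_mul_exp hS]
  rw [integral_const_mul, integral_sub_right_eq_self (gaussDensity S 0), integral_gaussDensity hS,
    mul_one]


/-- For the weight `w(ε) = c exp(−gᵀε/λ)` under the Gaussian measure `N(0, Σ)`,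
`(∫ w)²/(∫ w²) = exp(−gᵀΣg/λ²)`, so the idealized effective sample size
`I · (∫ w)²/(∫ w²)` equals `I · exp(−(1/λ²) gᵀΣg)`. -/
theorem stmt9 {n : ℕ} (S : Matrix (Fin n) (Fin n) ℝ) (hS : S.PosDef)
    (g : Fin n → ℝ) (lam : ℝ) (hlam : 0 < lam) (c : ℝ) (hc : 0 < c)
    (muS : Measure (Fin n → ℝ))
    (hmuS : muS = volume.withDensity fun ε => ENNReal.ofReal (gaussDensity S 0 ε))
    (w : (Fin n → ℝ) → ℝ) (hw : ∀ ε, w ε = c * Real.exp (-(g ⬝ᵥ ε) / lam)) :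
    (∫ ε, w ε ∂muS) ^ 2 / (∫ ε, (w ε) ^ 2 ∂muS)
        = Real.exp (-(g ⬝ᵥ (S *ᵥ g)) / lam ^ 2) ∧
    ∀ I : ℝ, 0 < I →
      I * ((∫ ε, w ε ∂muS) ^ 2 / (∫ ε, (w ε) ^ 2 ∂muS))
        = I * Real.exp (-(1 / lam ^ 2) * (g ⬝ᵥ (S *ᵥ g))) := by
  subst hmuS
  have hw1 : ∀ ε, w ε = c * Real.exp ((-(1 / lam) • g) ⬝ᵥ ε) := by
    intro ε
    rw [hw, smul_dotProduct, smul_eq_mul]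
    ring_nf
  have hw2 : ∀ ε, w ε ^ 2 = c ^ 2 * Real.exp ((-(2 / lam) • g) ⬝ᵥ ε) := by
    intro ε
    rw [hw, smul_dotProduct, smul_eq_mul, mul_pow, ← Real.exp_nat_mul]
    push_cast
    ring_nf
  have key : (∫ ε, w ε ∂(volume.withDensity fun ε => ENNReal.ofReal (gaussDensity S 0 ε))) ^ 2 /
      (∫ ε, (w ε) ^ 2 ∂(volume.withDensity fun ε => ENNReal.ofReal (gaussDensity S 0 ε)))
        = Real.exp (-(g ⬝ᵥ (S *ᵥ g)) / lam ^ 2) := by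
    simp_rw [hw2, hw1]
    rw [integral_const_mul, integral_const_mul, integral_exp_dotProduct hS,
      integral_exp_dotProduct hS, mul_pow, ← Real.exp_nat_mul,
      mul_div_mul_left _ _ (pow_ne_zero 2 hc.ne'), ← Real.exp_sub]
    simp only [mulVec_smul, smul_dotProduct, dotProduct_smul, smul_eq_mul]
    congr 1
    push_cast
    field_simp
    ring
  refine ⟨key, fun I _ => ?_⟩
  rw [key]
  ring_nf
end

section
/- Let l̲, ū, Δl̲, Δū ∈ ℝ^n, a ∈ ℝ^n, and suppose the constraint set 𝒰(a) := {z ∈ ℝ^n : l̲ ≤ z ≤ ū and Δl̲ ≤ z − a ≤ Δū} is nonempty, i.e., max(l̲, a + Δl̲) ≤ min(ū, a + Δū) componentwise. Then for every x ∈ ℝ^n, the sequential double clip φ^clip_{[l̲, ū]}( a + φ^clip_{[Δl̲, Δū]}(x − a) ) equals the Euclidean metric projection of x onto 𝒰(a): it lies in 𝒰(a) and is the unique point of 𝒰(a) minimizing the Euclidean distance to x. -/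
/-!
The constraint set is a box, the product of the intervals `[L j, H j]` with
`L = max lo (a + dlo)` and `H = min hi (a + dhi)`. Nonemptiness (`L ≤ H`) makes the two successive
clips collapse in each coordinate to the single clip onto `[L j, H j]`
(`double_clip_eq_single_clip`), so the result `p` lies in the box. The clip onto an interval
satisfies the obtuse-angle inequality `(x - p) * (y - p) ≤ 0` for `y` in that interval, that is,
`(x - p) ^ 2 + (y - p) ^ 2 ≤ (x - y) ^ 2` (`clip_pythagoras`). Summing over the coordinates yields
both minimality of the distance from `p` to `x` and, since equality forces every
`(y j - p j) ^ 2` to vanish, uniqueness of the minimizer.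
-/

/-- The componentwise clip function `φ^clip_{[l,u]} : ℝ^n → ℝ^n`. -/
def clip {n : ℕ} (l u : Fin n → ℝ) (z : Fin n → ℝ) : Fin n → ℝ :=
  fun j => min (max (z j) (l j)) (u j)

/-- If `[l, h]` and `[a + dl, a + dh]` intersect, clipping successively to the second and the first
is clipping to their intersection. -/
lemma double_clip_eq_single_clip {l h dl dh a x : ℝ}
    (hne : max l (a + dl) ≤ min h (a + dh)) :
    min (max (a + min (max (x - a) dl) dh) l) h
      = min (max x (max l (a + dl))) (min h (a + dh)) := by
  have inner_clip : a + min (max (x - a) dl) dh = min (max x (a + dl)) (a + dh) := by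
    rw [← min_add_add_left, ← max_add_add_left, add_sub_cancel]
  have hl : l ≤ a + dh := (le_max_left _ _).trans (hne.trans (min_le_right _ _))
  rw [inner_clip, max_min_distrib_right, max_eq_left hl, min_assoc, min_comm (a + dh) h,
    max_assoc, max_comm (a + dl) l]

/-- The Pythagorean form of the obtuse-angle inequality for the projection onto an interval. -/
lemma clip_pythagoras {L H x y : ℝ} (hL : L ≤ y) (hH : y ≤ H) :
    (x - min (max x L) H) ^ 2 + (y - min (max x L) H) ^ 2 ≤ (x - y) ^ 2 := by
  have obtuse : (x - min (max x L) H) * (y - min (max x L) H) ≤ 0 := by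
    rcases le_total x L with hx | hx
    · rw [max_eq_right hx, min_eq_left (hL.trans hH)]
      exact mul_nonpos_of_nonpos_of_nonneg (by linarith) (by linarith)
    · rw [max_eq_left hx]
      rcases le_total x H with hx' | hx'
      · simp [min_eq_left hx']
      · rw [min_eq_right hx']
        exact mul_nonpos_of_nonneg_of_nonpos (by linarith) (by linarith)
  linarith [show (x - y) ^ 2 = (x - min (max x L) H) ^ 2 + (y - min (max x L) H) ^ 2
    - 2 * ((x - min (max x L) H) * (y - min (max x L) H)) by ring]

/-- When the constraint set `𝒰(a) = {z : l̲ ≤ z ≤ ū, Δl̲ ≤ z − a ≤ Δū}` is nonempty, the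
sequential double clip `φ^clip_{[l̲,ū]}(a + φ^clip_{[Δl̲,Δū]}(x − a))` equals the Euclidean
metric projection of `x` onto `𝒰(a)`: it lies in `𝒰(a)` and is the unique point of `𝒰(a)`
minimizing the Euclidean distance to `x`. -/
theorem stmt18 {n : ℕ} (lo hi dlo dhi a : Fin n → ℝ)
    (hne : (fun j => max (lo j) (a j + dlo j)) ≤ fun j => min (hi j) (a j + dhi j)) :
    ∀ x : Fin n → ℝ,
      (lo ≤ clip lo hi (a + clip dlo dhi (x - a)) ∧
        clip lo hi (a + clip dlo dhi (x - a)) ≤ hi ∧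
        dlo ≤ clip lo hi (a + clip dlo dhi (x - a)) - a ∧
        clip lo hi (a + clip dlo dhi (x - a)) - a ≤ dhi) ∧
      ∀ y : Fin n → ℝ, lo ≤ y → y ≤ hi → dlo ≤ y - a → y - a ≤ dhi →
        Real.sqrt (∑ j, (x j - clip lo hi (a + clip dlo dhi (x - a)) j) ^ 2)
            ≤ Real.sqrt (∑ j, (x j - y j) ^ 2) ∧
        (Real.sqrt (∑ j, (x j - clip lo hi (a + clip dlo dhi (x - a)) j) ^ 2)
              = Real.sqrt (∑ j, (x j - y j) ^ 2)
          → y = clip lo hi (a + clip dlo dhi (x - a))) := by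
  intro x
  have hp : ∀ j, clip lo hi (a + clip dlo dhi (x - a)) j
      = min (max (x j) (max (lo j) (a j + dlo j))) (min (hi j) (a j + dhi j)) :=
    fun j => double_clip_eq_single_clip (hne j)
  generalize clip lo hi (a + clip dlo dhi (x - a)) = p at hp ⊢
  have hlow : ∀ j, max (lo j) (a j + dlo j) ≤ p j := fun j => by
    rw [hp j]; exact le_min (le_max_right _ _) (hne j)
  have hupp : ∀ j, p j ≤ min (hi j) (a j + dhi j) := fun j => by
    rw [hp j]; exact min_le_right _ _
  refine ⟨⟨fun j => (le_max_left _ _).trans (hlow j), fun j => (hupp j).trans (min_le_left _ _),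
    fun j => ?_, fun j => ?_⟩, ?_⟩
  · exact le_sub_iff_add_le'.2 ((le_max_right _ _).trans (hlow j))
  · exact sub_le_iff_le_add'.2 ((hupp j).trans (min_le_right _ _))
  intro y h1 h2 h3 h4
  have hpyth : ∀ j, (x j - p j) ^ 2 + (y j - p j) ^ 2 ≤ (x j - y j) ^ 2 := fun j => by
    rw [hp j]
    exact clip_pythagoras (max_le (h1 j) (le_sub_iff_add_le'.1 (h3 j)))
      (le_min (h2 j) (sub_le_iff_le_add'.1 (h4 j)))
  have hsum := Finset.sum_le_sum fun j (_ : j ∈ Finset.univ) => hpyth j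
  rw [Finset.sum_add_distrib] at hsum
  have hnonneg : ∀ j ∈ Finset.univ, 0 ≤ (y j - p j) ^ 2 := fun j _ => sq_nonneg _
  refine ⟨Real.sqrt_le_sqrt (by linarith [Finset.sum_nonneg hnonneg]), fun heq => ?_⟩
  rw [Real.sqrt_inj (Finset.sum_nonneg fun j _ => sq_nonneg _)
    (Finset.sum_nonneg fun j _ => sq_nonneg _)] at heq
  have hzero : ∑ j, (y j - p j) ^ 2 = 0 :=
    le_antisymm (by linarith) (Finset.sum_nonneg hnonneg)
  funext j
  exact sub_eq_zero.1 (pow_eq_zero_iff two_ne_zero |>.1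
    ((Finset.sum_eq_zero_iff_of_nonneg hnonneg).1 hzero j (Finset.mem_univ j)))
end
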